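/- Let H be a group acting by bijections on the circle ℝ/ℤ such that every h ∈ H maps ordered triples to ordered triples, and such that H acts transitively on ordered triples (for any two ordered triples (a,b,c) and (a′,b′,c′) there is h ∈ H with h·a = a′, h·b = b′, h·c = c′). Let R be an H-invariant anti-symmetric cross ratio on ℝ/ℤ. Then there is a constant k ∈ ℝ such that R(a,b,c,d) = k·R₀(a,b,c,d) for every quadruple (a,b,c,d) of pairwise distinct points; in particular R(a,b,c,d) = 0 whenever (a,b,c,d) is ordered and R(a,b,c,d) = k whenever (a,c,b,d) is ordered. -/

import Mathlib

/-- The circle `ℝ/ℤ`. -/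
abbrev Circle1 := AddCircle (1 : ℝ)

/-- Pairwise distinctness of three points. -/
def PD3 {X : Type*} (a b c : X) : Prop := a ≠ b ∧ a ≠ c ∧ b ≠ c

/-- Pairwise distinctness of four points. -/
def PD4 {X : Type*} (a b c d : X) : Prop :=
  a ≠ b ∧ a ≠ c ∧ a ≠ d ∧ b ≠ c ∧ b ≠ d ∧ c ≠ d

/-- Pairwise distinctness of five points. -/
def PD5 {X : Type*} (a b c d e : X) : Prop :=
  a ≠ b ∧ a ≠ c ∧ a ≠ d ∧ a ≠ e ∧ b ≠ c ∧ b ≠ d ∧ b ≠ e ∧ c ≠ d ∧ c ≠ e ∧ d ≠ e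

/-- A triple of points of `ℝ/ℤ` is ordered if it lifts to reals
`t₁ < t₂ < t₃ < t₁ + 1`. -/
def Ordered3 (a b c : Circle1) : Prop :=
  ∃ t₁ t₂ t₃ : ℝ, t₁ < t₂ ∧ t₂ < t₃ ∧ t₃ < t₁ + 1 ∧
    a = (t₁ : Circle1) ∧ b = (t₂ : Circle1) ∧ c = (t₃ : Circle1)

/-- A quadruple of points of `ℝ/ℤ` is ordered if it lifts to reals
`t₁ < t₂ < t₃ < t₄ < t₁ + 1`. -/
def Ordered4 (a b c d : Circle1) : Prop :=
  ∃ t₁ t₂ t₃ t₄ : ℝ, t₁ < t₂ ∧ t₂ < t₃ ∧ t₃ < t₄ ∧ t₄ < t₁ + 1 ∧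
    a = (t₁ : Circle1) ∧ b = (t₂ : Circle1) ∧ c = (t₃ : Circle1) ∧ d = (t₄ : Circle1)

/-- `R` is an anti-symmetric cross ratio: bounded on pairwise distinct quadruples,
anti-symmetric in the first pair and under exchanging the two pairs, additive (cocycle)
in the first pair, and extended by `0` to the degenerate quadruples. -/
def IsCrossRatio {X : Type*} (R : X → X → X → X → ℝ) : Prop :=
  (∃ M, ∀ a b c d, PD4 a b c d → |R a b c d| ≤ M) ∧
  (∀ a b c d, PD4 a b c d → R a b c d = - R b a c d) ∧
  (∀ a b c d, PD4 a b c d → R c d a b = - R a b c d) ∧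
  (∀ a b b' c d, PD5 a b b' c d → R a b c d + R b b' c d = R a b' c d) ∧
  (∀ a b c, PD3 a b c → R a a b c = 0) ∧
  (∀ a b c, PD3 a b c → R b c a a = 0)

noncomputable section

/-- The representative in `[0,1)`. -/
def posn (x : Circle1) : ℝ :=
  haveI : Fact ((0 : ℝ) < 1) := ⟨one_pos⟩
  (AddCircle.equivIco 1 0 x : ℝ)

end

theorem posn_nonneg (x : Circle1) : 0 ≤ posn x := by
  haveI : Fact ((0 : ℝ) < 1) := ⟨one_pos⟩
  exact (AddCircle.equivIco 1 0 x).2.1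

theorem posn_lt (x : Circle1) : posn x < 1 := by
  haveI : Fact ((0 : ℝ) < 1) := ⟨one_pos⟩
  have := (AddCircle.equivIco 1 0 x).2.2
  simpa [posn] using this

theorem coe_posn (x : Circle1) : ((posn x : ℝ) : Circle1) = x := by
  haveI : Fact ((0 : ℝ) < 1) := ⟨one_pos⟩
  exact (AddCircle.equivIco (1 : ℝ) 0).symm_apply_apply x

theorem posn_coe (t : ℝ) (h0 : 0 ≤ t) (h1 : t < 1) : posn (t : Circle1) = t := by
  haveI : Fact ((0 : ℝ) < 1) := ⟨one_pos⟩
  have := (AddCircle.equivIco (1 : ℝ) 0).apply_symm_apply ⟨t, h0, by simpa using h1⟩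
  exact congrArg Subtype.val this

theorem posn_inj {x y : Circle1} (h : posn x = posn y) : x = y := by
  rw [← coe_posn x, h, coe_posn]

theorem posn_zero : posn 0 = 0 := by
  have := posn_coe 0 le_rfl one_pos
  simpa using this

theorem posn_sub_coe (s t : ℝ) (h0 : s ≤ t) (h1 : t < s + 1) :
    posn ((t : Circle1) - (s : Circle1)) = t - s := by
  rw [← AddCircle.coe_sub]
  exact posn_coe _ (by linarith) (by linarith)

theorem O3_iff (a b c : Circle1) :
    Ordered3 a b c ↔ 0 < posn (b - a) ∧ posn (b - a) < posn (c - a) := by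
  constructor
  · rintro ⟨t₁, t₂, t₃, h1, h2, h3, rfl, rfl, rfl⟩
    rw [posn_sub_coe _ _ (by linarith) (by linarith), posn_sub_coe _ _ (by linarith) (by linarith)]
    constructor <;> linarith
  · rintro ⟨h1, h2⟩
    have := posn_lt (c - a)
    refine ⟨posn a, posn a + posn (b - a), posn a + posn (c - a), by linarith, by linarith,
      by linarith, ?_, ?_, ?_⟩ <;> simp [AddCircle.coe_add, coe_posn]

theorem O4_iff (a b c d : Circle1) :
    Ordered4 a b c d ↔
      0 < posn (b - a) ∧ posn (b - a) < posn (c - a) ∧ posn (c - a) < posn (d - a) := by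
  constructor
  · rintro ⟨t₁, t₂, t₃, t₄, h1, h2, h3, h4, rfl, rfl, rfl, rfl⟩
    rw [posn_sub_coe _ _ (by linarith) (by linarith), posn_sub_coe _ _ (by linarith) (by linarith),
      posn_sub_coe _ _ (by linarith) (by linarith)]
    refine ⟨?_, ?_, ?_⟩ <;> linarith
  · rintro ⟨h1, h2, h3⟩
    have := posn_lt (d - a)
    refine ⟨posn a, posn a + posn (b - a), posn a + posn (c - a), posn a + posn (d - a),
      by linarith, by linarith, by linarith,
      by linarith, ?_, ?_, ?_, ?_⟩ <;> simp [AddCircle.coe_add, coe_posn]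

theorem O4_rot {a b c d : Circle1} (h : Ordered4 a b c d) : Ordered4 b c d a := by
  obtain ⟨t₁, t₂, t₃, t₄, h1, h2, h3, h4, rfl, rfl, rfl, rfl⟩ := h
  refine ⟨t₂, t₃, t₄, t₁ + 1, h2, h3, h4, by linarith, rfl, rfl, rfl, ?_⟩
  rw [AddCircle.coe_add, AddCircle.coe_period, add_zero]

theorem O4_split (a b c d : Circle1) :
    Ordered4 a b c d ↔ Ordered3 a b c ∧ Ordered3 a c d := by
  rw [O4_iff, O3_iff, O3_iff]
  constructor
  · rintro ⟨h1, h2, h3⟩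
    exact ⟨⟨h1, h2⟩, by linarith, h3⟩
  · rintro ⟨⟨h1, h2⟩, _, h3⟩
    exact ⟨h1, h2, h3⟩

theorem O4_PD {a b c d : Circle1} (h : Ordered4 a b c d) : PD4 a b c d := by
  rw [O4_iff] at h
  obtain ⟨h1, h2, h3⟩ := h
  refine ⟨?_, ?_, ?_, ?_, ?_, ?_⟩ <;> rintro rfl <;>
    (try rw [sub_self, posn_zero] at h1) <;> (try rw [sub_self, posn_zero] at h2) <;>
    (try rw [sub_self, posn_zero] at h3) <;> linarith

theorem O4_of_PD {a b c d : Circle1} (h : PD4 a b c d) :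
    Ordered4 a b c d ∨ Ordered4 a b d c ∨ Ordered4 a c b d ∨ Ordered4 a c d b ∨
      Ordered4 a d b c ∨ Ordered4 a d c b := by
  obtain ⟨h1, h2, h3, h4, h5, h6⟩ := h
  have key : ∀ x y : Circle1, x ≠ y → posn (x - a) ≠ posn (y - a) := by
    intro x y hxy h
    exact hxy (sub_left_injective (posn_inj h))
  have pos : ∀ x : Circle1, a ≠ x → 0 < posn (x - a) := by
    intro x hx
    have := key x a hx.symm
    rw [sub_self, posn_zero] at this
    exact lt_of_le_of_ne (posn_nonneg _) this.symm
  have p1 := pos _ h1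
  have p2 := pos _ h2
  have p3 := pos _ h3
  simp only [O4_iff]
  rcases lt_or_gt_of_ne (key _ _ h4) with q1 | q1 <;>
  rcases lt_or_gt_of_ne (key _ _ h5) with q2 | q2 <;>
  rcases lt_or_gt_of_ne (key _ _ h6) with q3 | q3 <;> grind

theorem PD4_swap {X : Type*} {a b c d : X} (h : PD4 a b c d) : PD4 c d a b := by
  unfold PD4 at *; grind

theorem PD4_swap1 {X : Type*} {a b c d : X} (h : PD4 a b c d) : PD4 b a c d := by
  unfold PD4 at *; grind

theorem CR_anti2 {X : Type*} {R : X → X → X → X → ℝ} (hR : IsCrossRatio R) {a b c d : X}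
    (h : PD4 a b c d) : R a b d c = - R a b c d := by
  obtain ⟨-, h1, h2, -⟩ := hR
  have e1 := h2 _ _ _ _ h
  have e2 := h1 _ _ _ _ (PD4_swap h)
  have e3 := h2 _ _ _ _ (PD4_swap1 (PD4_swap h))
  linarith

theorem zero_on_ordered {H : Type*} [Group H] [MulAction H Circle1]
    (horder : ∀ (h : H) (a b c : Circle1),
      Ordered3 a b c → Ordered3 (h • a) (h • b) (h • c))
    (htrans : ∀ a b c a' b' c' : Circle1, Ordered3 a b c → Ordered3 a' b' c' →
      ∃ h : H, h • a = a' ∧ h • b = b' ∧ h • c = c')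
    (R : Circle1 → Circle1 → Circle1 → Circle1 → ℝ)
    (hR : IsCrossRatio R)
    (hinv : ∀ (h : H) (a b c d : Circle1),
      R (h • a) (h • b) (h • c) (h • d) = R a b c d)
    (x y c d : Circle1) (hO : Ordered4 x y c d) : R x y c d = 0 := by
  have hO' : Ordered4 c d x y := O4_rot (O4_rot hO)
  have hx : Ordered3 c d x := ((O4_split _ _ _ _).1 hO').1
  have hy : Ordered3 c d y := by
    rw [O4_iff] at hO'
    rw [O3_iff]
    exact ⟨hO'.1, hO'.2.1.trans hO'.2.2⟩
  obtain ⟨h, hc, hd, hxy⟩ := htrans _ _ _ _ _ _ hx hy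
  obtain ⟨⟨M, hM⟩, -, -, hadd, -⟩ := hR
  have step : ∀ n : ℕ, Ordered4 c d (h ^ n • x) (h ^ (n + 1) • x) ∧
      R (h ^ n • x) (h ^ (n + 1) • x) c d = R x y c d := by
    intro n
    induction n with
    | zero => simpa [hxy] using hO'
    | succ n ih =>
      obtain ⟨i1, i2⟩ := ih
      have e : ∀ m : ℕ, h ^ (m + 1) • x = h • (h ^ m • x) := fun m => by
        rw [pow_succ', mul_smul]
      constructor
      · rw [O4_split] at i1 ⊢
        have j1 := horder h _ _ _ i1.1
        have j2 := horder h _ _ _ i1.2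
        rw [hc, ← e] at j1 j2
        rw [hd] at j1
        rw [← e] at j2
        exact ⟨j1, j2⟩
      · have j := hinv h (h ^ n • x) (h ^ (n + 1) • x) c d
        rw [hc, hd, ← e, ← e] at j
        rw [j, i2]
  have tot : ∀ n : ℕ, Ordered4 c d x (h ^ (n + 1) • x) ∧
      R x (h ^ (n + 1) • x) c d = (n + 1 : ℕ) * R x y c d := by
    intro n
    induction n with
    | zero => simpa [hxy] using hO'
    | succ n ih =>
      obtain ⟨i1, i2⟩ := ih
      obtain ⟨s1, s2⟩ := step (n + 1)
      have o : Ordered4 c d x (h ^ (n + 1 + 1) • x) := by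
        rw [O4_iff] at i1 s1 ⊢
        exact ⟨i1.1, i1.2.1, i1.2.2.trans s1.2.2⟩
      refine ⟨o, ?_⟩
      have p1 := O4_PD i1
      have p2 := O4_PD s1
      have p3 := O4_PD o
      have := hadd x (h ^ (n + 1) • x) (h ^ (n + 1 + 1) • x) c d
        (by unfold PD4 at p1 p2 p3; unfold PD5; grind)
      rw [← this, i2, s2]
      push_cast
      ring
  by_contra hne
  have hpos : 0 < |R x y c d| := abs_pos.2 hne
  obtain ⟨n, hn⟩ := exists_nat_gt (M / |R x y c d|)
  rw [div_lt_iff₀ hpos] at hn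
  obtain ⟨t1, t2⟩ := tot n
  have b := hM _ _ _ _ (PD4_swap (O4_PD t1))
  rw [t2, abs_mul, Nat.abs_cast] at b
  push_cast at b
  linarith

/-- if a group `H` acts on the circle `ℝ/ℤ` preserving ordered triples and
transitively on ordered triples, then every `H`-invariant anti-symmetric cross ratio
`R` is a constant multiple `k` of the cross ratio `R₀`; in particular `R` vanishes on
ordered quadruples and equals `k` on quadruples `(a,b,c,d)` with `(a,c,b,d)` ordered. -/
theorem stmt8 {H : Type*} [Group H] [MulAction H Circle1]
    (horder : ∀ (h : H) (a b c : Circle1),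
      Ordered3 a b c → Ordered3 (h • a) (h • b) (h • c))
    (htrans : ∀ a b c a' b' c' : Circle1, Ordered3 a b c → Ordered3 a' b' c' →
      ∃ h : H, h • a = a' ∧ h • b = b' ∧ h • c = c')
    (R : Circle1 → Circle1 → Circle1 → Circle1 → ℝ)
    (hR : IsCrossRatio R)
    (hinv : ∀ (h : H) (a b c d : Circle1),
      R (h • a) (h • b) (h • c) (h • d) = R a b c d)
    (R₀ : Circle1 → Circle1 → Circle1 → Circle1 → ℝ)
    (hR₀ : IsCrossRatio R₀)
    (hR₀0 : ∀ a b c d, Ordered4 a b c d → R₀ a b c d = 0)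
    (hR₀1 : ∀ a b c d, Ordered4 a c b d → R₀ a b c d = 1) :
    ∃ k : ℝ,
      (∀ a b c d, PD4 a b c d → R a b c d = k * R₀ a b c d) ∧
      (∀ a b c d, Ordered4 a b c d → R a b c d = 0) ∧
      (∀ a b c d, Ordered4 a c b d → R a b c d = k) := by
  have hz := zero_on_ordered horder htrans R hR hinv
  have hR' := hR
  obtain ⟨-, A1, A2, Aadd, -⟩ := hR'
  have fixd : ∀ a b c d d', Ordered4 a c b d → Ordered4 a c b d' →
      posn (d - a) < posn (d' - a) → R a b c d = R a b c d' := by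
    intro a b c d d' h h' hlt
    have o : Ordered4 d d' a b := by
      have : Ordered4 a b d d' := by
        rw [O4_iff] at h h' ⊢
        exact ⟨h.1.trans h.2.1, h.2.2, hlt⟩
      exact O4_rot (O4_rot this)
    have z := hz _ _ _ _ o
    have p := O4_PD h
    have p' := O4_PD h'
    have q := O4_PD o
    have e := Aadd c d d' a b (by unfold PD4 at p p' q; unfold PD5; grind)
    have f := A2 c d a b (by unfold PD4 at *; grind)
    have f' := A2 c d' a b (by unfold PD4 at *; grind)
    linarith
  have fixd2 : ∀ a b c d d', Ordered4 a c b d → Ordered4 a c b d' →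
      R a b c d = R a b c d' := by
    intro a b c d d' h h'
    rcases lt_trichotomy (posn (d - a)) (posn (d' - a)) with q | q | q
    · exact fixd _ _ _ _ _ h h' q
    · rw [sub_left_injective (posn_inj q)]
    · exact (fixd _ _ _ _ _ h' h q).symm
  have const : ∀ a b c d a' b' c' d', Ordered4 a c b d → Ordered4 a' c' b' d' →
      R a b c d = R a' b' c' d' := by
    intro a b c d a' b' c' d' h h'
    obtain ⟨g, ga, gc, gb⟩ := htrans _ _ _ _ _ _ ((O4_split _ _ _ _).1 h).1
      ((O4_split _ _ _ _).1 h').1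
    rw [← hinv g, ga, gb, gc]
    apply fixd2 _ _ _ _ _ _ h'
    rw [O4_split] at h ⊢
    have j1 := horder g _ _ _ h.1
    have j2 := horder g _ _ _ h.2
    rw [ga, gc, gb] at j1
    rw [ga, gb] at j2
    exact ⟨j1, j2⟩
  obtain ⟨a₀, b₀, c₀, d₀, h₀⟩ : ∃ a b c d, Ordered4 a c b d :=
    ⟨((0 : ℝ) : Circle1), ((1/2 : ℝ) : Circle1), ((1/4 : ℝ) : Circle1), ((3/4 : ℝ) : Circle1),
      0, 1/4, 1/2, 3/4, by norm_num, by norm_num, by norm_num, by norm_num, rfl, rfl, rfl, rfl⟩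
  have hk : ∀ a b c d, Ordered4 a c b d → R a b c d = R a₀ b₀ c₀ d₀ :=
    fun a b c d h => const _ _ _ _ _ _ _ _ h h₀
  refine ⟨R a₀ b₀ c₀ d₀, ?_, hz, hk⟩
  intro a b c d hp
  have r1 := A1 _ _ _ _ hp
  have s1 := hR₀.2.1 _ _ _ _ hp
  have r2 := CR_anti2 hR hp
  have s2 := CR_anti2 hR₀ hp
  have r3 := CR_anti2 hR (PD4_swap1 hp)
  have s3 := CR_anti2 hR₀ (PD4_swap1 hp)
  rcases O4_of_PD hp with h | h | h | h | h | h
  · rw [hz _ _ _ _ h, hR₀0 _ _ _ _ h, mul_zero]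
  · have u := hz _ _ _ _ h
    have v := hR₀0 _ _ _ _ h
    rw [show R a b c d = 0 by linarith, show R₀ a b c d = 0 by linarith, mul_zero]
  · rw [hk _ _ _ _ h, hR₀1 _ _ _ _ h, mul_one]
  · have h' := O4_rot (O4_rot (O4_rot h))
    have u := hz _ _ _ _ h'
    have v := hR₀0 _ _ _ _ h'
    rw [show R a b c d = 0 by linarith, show R₀ a b c d = 0 by linarith, mul_zero]
  · have u := hk _ _ _ _ h
    have v := hR₀1 _ _ _ _ h
    rw [show R₀ a b c d = -1 by linarith]
    linarith
  · have h' := O4_rot (O4_rot (O4_rot h))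
    have u := hz _ _ _ _ h'
    have v := hR₀0 _ _ _ _ h'
    rw [show R a b c d = 0 by linarith, show R₀ a b c d = 0 by linarith, mul_zero]
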